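/- Let c ∈ ℝ and define f(μ) = ∫ x d(N(μ,1)[·|(c,∞)]). Suppose (y_k) is a sequence of reals with y_k > c for all k and y_k → c, and suppose (μ_k) is a sequence of reals with f(μ_k) = y_k for all k. Then μ_k → −∞. -/

import Mathlib

/-!
Write `N(m)` for the unit-variance Gaussian with mean `m`. Markov's inequality, applied to `x - c`
under `N(m)` conditioned on `(c, ∞)`, bounds the conditional mean below by `c` plus the conditional
mass of `[c + 1, ∞)`. Conditioning on a superset only increases mass, so this mass is at least
`N(m) [c + 1, ∞)`, which is nondecreasing in the mean (`gaussianReal_Ici_mono`) and positive.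
Hence along means bounded below by `M` the conditional mean stays at distance at least
`N(M) [c + 1, ∞) > 0` from `c`; if it tends to `c`, the means eventually drop below every `M`.
-/

open MeasureTheory ProbabilityTheory Filter

lemma gaussianReal_Ici_mono (a : ℝ) {M m : ℝ} (h : M ≤ m) :
    (gaussianReal M 1) (Set.Ici a) ≤ (gaussianReal m 1) (Set.Ici a) := by
  have e : gaussianReal m 1 = (gaussianReal M 1).map (· + (m - M)) := by
    rw [gaussianReal_map_add_const]; congr 1; ring
  rw [e, Measure.map_apply (by fun_prop) measurableSet_Ici]
  refine measure_mono fun x hx => ?_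
  simp only [Set.mem_preimage, Set.mem_Ici] at hx ⊢
  linarith

lemma gaussianReal_pos_of_volume_pos (m : ℝ) {s : Set ℝ} (hs : volume s ≠ 0) :
    (gaussianReal m 1) s ≠ 0 :=
  fun h => hs (gaussianReal_absolutelyContinuous' m one_ne_zero h)

lemma gaussianReal_Ici_le_condMean_sub (c m : ℝ) :
    (gaussianReal m 1).real (Set.Ici (c + 1)) ≤
      (∫ x, x ∂((gaussianReal m 1)[|Set.Ioi c])) - c := by
  have hpos : (gaussianReal m 1) (Set.Ioi c) ≠ 0 :=
    gaussianReal_pos_of_volume_pos m (by simp)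
  have hP : IsProbabilityMeasure ((gaussianReal m 1)[|Set.Ioi c]) :=
    cond_isProbabilityMeasure hpos
  have hint : Integrable (fun x : ℝ => x) ((gaussianReal m 1)[|Set.Ioi c]) := by
    have h : Integrable (fun x : ℝ => x) (gaussianReal m 1) :=
      (memLp_id_gaussianReal 1).integrable le_rfl
    exact h.restrict.smul_measure (ENNReal.inv_ne_top.2 hpos)
  have hnn : 0 ≤ᵐ[(gaussianReal m 1)[|Set.Ioi c]] fun x : ℝ => x - c := by
    filter_upwards [ae_cond_mem measurableSet_Ioi] with x hx
    exact sub_nonneg.2 (le_of_lt hx)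
  have markov := mul_meas_ge_le_integral_of_nonneg hnn (hint.sub (integrable_const c)) 1
  rw [integral_sub hint (integrable_const c)] at markov
  simp only [integral_const, probReal_univ, one_smul, one_mul] at markov
  refine le_trans ?_ markov
  have hset : {x : ℝ | 1 ≤ x - c} = Set.Ici (c + 1) := by
    ext x; simp [le_sub_iff_add_le']
  have hsub : Set.Ioi c ∩ Set.Ici (c + 1) = Set.Ici (c + 1) :=
    Set.inter_eq_right.2 fun x hx => by
      simp only [Set.mem_Ici, Set.mem_Ioi] at hx ⊢; linarith
  rw [hset]
  refine ENNReal.toReal_mono (measure_ne_top _ _) ?_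
  rw [cond_apply measurableSet_Ioi, hsub]
  exact le_mul_of_one_le_left' (ENNReal.one_le_inv.2 prob_le_one)

/-- As the observed value approaches the one-sided selection threshold from
above, the conditional MLE tends to `−∞`: if `f(μ) = E_μ[y | y > c]`,
`y_k > c`, `y_k → c` and `f(μ_k) = y_k`, then `μ_k → −∞`. -/
theorem conditional_mle_to_neg_infty
    (c : ℝ) (y : ℕ → ℝ) (hy : ∀ k, c < y k)
    (hyc : Tendsto y atTop (nhds c))
    (μ : ℕ → ℝ)
    (hμ : ∀ k, (∫ x, x ∂((gaussianReal (μ k) 1)[|Set.Ioi c])) = y k) :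
    Tendsto μ atTop atBot := by
  refine tendsto_atBot.2 fun M => ?_
  have hδ : 0 < (gaussianReal M 1).real (Set.Ici (c + 1)) :=
    ENNReal.toReal_pos (gaussianReal_pos_of_volume_pos M (by simp)) (measure_ne_top _ _)
  filter_upwards [hyc.eventually_lt_const (lt_add_of_pos_right c hδ)] with k hk
  by_contra! hM
  have h1 := gaussianReal_Ici_le_condMean_sub c (μ k)
  have h2 : (gaussianReal M 1).real (Set.Ici (c + 1)) ≤
      (gaussianReal (μ k) 1).real (Set.Ici (c + 1)) :=
    ENNReal.toReal_mono (measure_ne_top _ _) (gaussianReal_Ici_mono _ hM.le)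
  rw [hμ k] at h1
  linarith
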